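/- The achromatic number of the Cartesian product K_6 □ K_7 equals 18. -/

import Mathlib

/-- A proper complete vertex colouring: proper, uses every colour of `C`,
and every pair of distinct colours appears on the endpoints of some edge. -/
def IsProperComplete {V C : Type*} (G : SimpleGraph V) (f : V → C) : Prop :=
  (∀ v w, G.Adj v w → f v ≠ f w) ∧
  Function.Surjective f ∧
  ∀ c₁ c₂ : C, c₁ ≠ c₂ → ∃ v w, G.Adj v w ∧ f v = c₁ ∧ f w = c₂

/-- The achromatic number: the maximum number of colours in a proper complete
vertex colouring. -/
noncomputable def achr {V : Type*} (G : SimpleGraph V) : ℕ :=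
  sSup {n : ℕ | ∃ f : V → Fin n, IsProperComplete G f}


/-!
A cell has only `11` neighbours, so a complete colouring with at least `19` colours uses each colour
at least twice, and counting cells shows that at least `15` colours are used exactly twice. The two
cells of such a colour, a pair, lie in different rows and columns, so they have `20` neighbours,
among which each of the other `14` pairs and each of the remaining colours must occur. As there are
at least four remaining colours, at most `16` of the `20` neighbours belong to pairs, so at most two
of the `14` pairs have both their cells there. These counts, in a form that applies to partial
pairings, prune an exhaustive search for `15` such pairs up to permutations of rows and columns,
which the kernel evaluates and which finds none.
-/

namespace RookColouring

open Finset SimpleGraph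

section CompleteColouring

variable {V C : Type*} {G : SimpleGraph V} {f : V → C}

/-- `π` exchanges the two vertices of every colour in `Q`, all colours in `Q` being used exactly
twice, and fixes every other vertex. -/
structure IsPartnerMap (f : V → C) (Q : Finset C) (π : V → V) : Prop where
  apply_eq_self_iff : ∀ v, π v = v ↔ f v ∉ Q
  colour_apply : ∀ v, f (π v) = f v
  eq_or_eq_apply : ∀ v w, f v ∈ Q → f w = f v → w = v ∨ w = π v

namespace IsPartnerMap

variable {Q : Finset C} {π : V → V} (hπ : IsPartnerMap f Q π)
include hπ

lemma involutive : Function.Involutive π := fun v ↦ by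
  by_cases hv : f v ∈ Q
  · obtain h | h := hπ.eq_or_eq_apply v (π (π v)) hv (by simp only [hπ.colour_apply])
    · exact h
    · exact absurd hv ((hπ.colour_apply v) ▸ (hπ.apply_eq_self_iff (π v)).1 h)
  · rw [(hπ.apply_eq_self_iff v).2 hv, (hπ.apply_eq_self_iff v).2 hv]

lemma not_adj (hf : IsProperComplete G f) (v : V) : ¬ G.Adj v (π v) :=
  fun h ↦ hf.1 _ _ h (hπ.colour_apply v).symm

lemma exists_adj_or_adj (hf : IsProperComplete G f) {v : V} (hv : f v ∈ Q) {d : C}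
    (hd : d ≠ f v) : ∃ w, (G.Adj v w ∨ G.Adj (π v) w) ∧ f w = d := by
  obtain ⟨u, w, huw, hu, rfl⟩ := hf.2.2 (f v) d hd.symm
  obtain rfl | rfl := hπ.eq_or_eq_apply v u hv hu
  exacts [⟨w, .inl huw, rfl⟩, ⟨w, .inr huw, rfl⟩]

end IsPartnerMap

variable [Fintype V] [DecidableEq C]

/-- The set of vertices of colour `c`. -/
def colourClass (f : V → C) (c : C) : Finset V := {v | f v = c}

@[simp]
lemma mem_colourClass {c : C} {v : V} : v ∈ colourClass f c ↔ f v = c := by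
  simp [colourClass]

lemma sum_card_colourClass (f : V → C) (Q : Finset C) :
    ∑ c ∈ Q, #(colourClass f c) = #{v | f v ∈ Q} := by
  rw [card_eq_sum_card_fiberwise (f := f) (t := Q) fun v hv ↦ by simpa using hv]
  refine sum_congr rfl fun c hc ↦ congrArg card (Finset.ext fun v ↦ ?_)
  simp only [mem_colourClass, mem_filter, mem_univ, true_and]
  exact ⟨fun h ↦ ⟨h ▸ hc, h⟩, And.right⟩

lemma card_le_degree_add_one [Fintype C] (hf : IsProperComplete G f) {v : V}
    [Fintype (G.neighborSet v)] (hv : colourClass f (f v) = {v}) :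
    Fintype.card C ≤ G.degree v + 1 := by
  have hcover : univ.erase (f v) ⊆ (G.neighborFinset v).image f := fun d hd ↦ by
    obtain ⟨u, w, huw, hu, rfl⟩ := hf.2.2 (f v) d (ne_of_mem_erase hd).symm
    obtain rfl : u = v := by simpa [hv] using mem_colourClass.2 hu
    exact mem_image_of_mem f (by simpa using huw)
  have := (card_le_card hcover).trans card_image_le
  rw [card_erase_of_mem (mem_univ _), card_univ, card_neighborFinset_eq_degree] at this
  omega

lemma three_mul_card_le [Fintype C] (h : ∀ c, 2 ≤ #(colourClass f c)) :
    3 * Fintype.card C ≤ Fintype.card V + #{c | #(colourClass f c) = 2} := by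
  have hsum : ∑ c, #(colourClass f c) = Fintype.card V := by
    simpa using sum_card_colourClass f univ
  calc 3 * Fintype.card C = ∑ _c : C, 3 := by simp [mul_comm]
    _ ≤ ∑ c, (#(colourClass f c) + if #(colourClass f c) = 2 then 1 else 0) :=
        sum_le_sum fun c _ ↦ by have := h c; split_ifs <;> omega
    _ = _ := by rw [sum_add_distrib, hsum, card_filter]

lemma exists_isPartnerMap (f : V → C) {Q : Finset C} (hQ : ∀ c ∈ Q, #(colourClass f c) = 2) :
    ∃ π, IsPartnerMap f Q π := by
  classical
  have hpartner (v : V) (hv : f v ∈ Q) : ∃ w, w ≠ v ∧ colourClass f (f v) = {v, w} := by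
    obtain ⟨a, b, hab, h⟩ := card_eq_two.1 (hQ _ hv)
    have hmem : v = a ∨ v = b := by simpa [h] using mem_colourClass.2 (rfl : f v = f v)
    obtain rfl | rfl := hmem
    · exact ⟨b, hab.symm, h⟩
    · exact ⟨a, hab, h.trans (pair_comm a v)⟩
  choose! π hne hclass using hpartner
  refine ⟨fun v ↦ if f v ∈ Q then π v else v, fun v ↦ ?_, fun v ↦ ?_, fun v w hv hw ↦ ?_⟩
  · by_cases hv : f v ∈ Q <;> simp [hv, hne]
  · by_cases hv : f v ∈ Q
    · simpa [hv, hclass v hv] using mem_colourClass (f := f) (c := f v) (v := π v)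
    · simp [hv]
  · simpa [hv, hclass v hv] using mem_colourClass.2 hw

end CompleteColouring

section Pairing

/-- The cells of the `6 × 7` grid, as (row, column). -/
abbrev Cell := Fin 6 × Fin 7

/-- The graph `K₆ □ K₇`: two cells are adjacent when they share exactly one coordinate. -/
abbrev rook : SimpleGraph Cell := (⊤ : SimpleGraph (Fin 6)) □ (⊤ : SimpleGraph (Fin 7))

lemma rook_adj {c d : Cell} :
    rook.Adj c d ↔ c.1 ≠ d.1 ∧ c.2 = d.2 ∨ c.2 ≠ d.2 ∧ c.1 = d.1 := by
  simp [boxProd_adj]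

instance : DecidableRel rook.Adj := fun _ _ ↦ decidable_of_iff _ rook_adj.symm

lemma degree_rook (c : Cell) : rook.degree c = 11 := by
  simp [degree_boxProd]

/-- The cells adjacent to `c` or to `d`. -/
def nbhd (c d : Cell) : Finset Cell := {z | rook.Adj c z ∨ rook.Adj d z}

@[simp]
lemma mem_nbhd {c d z : Cell} : z ∈ nbhd c d ↔ rook.Adj c z ∨ rook.Adj d z := by
  simp [nbhd]

lemma card_nbhd {c d : Cell} (hrow : c.1 ≠ d.1) (hcol : c.2 ≠ d.2) : #(nbhd c d) = 20 := by
  have hunion : nbhd c d = rook.neighborFinset c ∪ rook.neighborFinset d := by ext; simp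
  have hinter : rook.neighborFinset c ∩ rook.neighborFinset d = {(c.1, d.2), (d.1, c.2)} := by
    ext ⟨i, j⟩
    simp only [mem_inter, mem_neighborFinset, rook_adj, mem_insert, mem_singleton, Prod.mk.injEq]
    grind
  have htwo : #{(c.1, d.2), (d.1, c.2)} = 2 := card_pair fun h ↦ hrow (Prod.ext_iff.1 h).1
  have := card_union_add_card_inter (rook.neighborFinset c) (rook.neighborFinset d)
  rw [hinter, htwo, ← hunion] at this
  simp only [card_neighborFinset_eq_degree, degree_rook] at this
  omega

/-- The partner map of `15` two-cell colour classes of a complete colouring of `rook` with `19` or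
`20` colours, stripped of its colours: the twelve fixed cells carry four or five further colours,
each of which occurs next to every pair. -/
structure IsPairing (π : Cell → Cell) : Prop where
  involutive : Function.Involutive π
  row_ne : ∀ c, π c ≠ c → c.1 ≠ (π c).1
  col_ne : ∀ c, π c ≠ c → c.2 ≠ (π c).2
  mem_nbhd_or_apply_mem_nbhd : ∀ c d, π c ≠ c → π d ≠ d → d ≠ c → d ≠ π c →
    d ∈ nbhd c (π c) ∨ π d ∈ nbhd c (π c)
  card_fixed : #{c | π c = c} = 12
  four_le_card_fixed : ∀ c, π c ≠ c → 4 ≤ #{d ∈ nbhd c (π c) | π d = d}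
  card_le_five_of_isClique : ∀ A : Finset Cell, rook.IsClique A → (∀ c ∈ A, π c = c) → #A ≤ 5

namespace IsPairing

variable {π : Cell → Cell} (hπ : IsPairing π) {c : Cell} {D A : Finset Cell} {p : ℕ}
include hπ

lemma two_mul_card_nbhd_inter (hc : π c ≠ c) (hcA : c ∉ A) (hA : ∀ d ∈ A, π d ∈ A ∧ π d ≠ d) :
    2 * #(nbhd c (π c) ∩ A) =
      #A + #{d ∈ A | d ∈ nbhd c (π c) ∧ π d ∈ nbhd c (π c)} := by
  set N := nbhd c (π c)
  have himage (d : Cell) : d ∈ (N ∩ A).image π ↔ π d ∈ N ∧ d ∈ A := by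
    refine ⟨fun h ↦ ?_, fun h ↦ mem_image.2 ⟨π d, mem_inter.2 ⟨h.1, (hA d h.2).1⟩,
      hπ.involutive d⟩⟩
    obtain ⟨e, he, rfl⟩ := mem_image.1 h
    exact ⟨(hπ.involutive e).symm ▸ (mem_inter.1 he).1, (hA e (mem_inter.1 he).2).1⟩
  have hunion : N ∩ A ∪ (N ∩ A).image π = A := by
    ext d
    rw [mem_union, himage, mem_inter]
    refine ⟨fun h ↦ h.elim And.right And.right, fun hd ↦ ?_⟩
    have hdc : d ≠ π c := fun h ↦ hcA (by simpa [h, hπ.involutive c] using (hA d hd).1)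
    exact (hπ.mem_nbhd_or_apply_mem_nbhd c d hc (hA d hd).2 (fun h ↦ hcA (h ▸ hd)) hdc).imp
      (⟨·, hd⟩) (⟨·, hd⟩)
  have hinter : N ∩ A ∩ (N ∩ A).image π = {d ∈ A | d ∈ N ∧ π d ∈ N} := by
    ext d
    rw [mem_inter, himage, mem_inter, mem_filter]
    tauto
  rw [← hinter, ← congrArg card hunion, card_union_add_card_inter,
    card_image_of_injective _ hπ.involutive.injective, two_mul]

lemma card_filter_compl (hp : #{d ∈ D | π d ≠ d} = 2 * p) : #{d ∈ Dᶜ | π d ≠ d} + 2 * p = 30 := by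
  have hall := card_filter_add_card_filter_not (s := univ) fun d ↦ π d = d
  have hsplit := card_union_of_disjoint (disjoint_filter_filter (p := fun d ↦ π d ≠ d)
    (q := fun d ↦ π d ≠ d) (disjoint_compl_right (a := D)))
  rw [← filter_union, union_compl, hp] at hsplit
  have hcard : #(univ : Finset Cell) = 42 := rfl
  have := hπ.card_fixed
  simp only [ne_eq] at hsplit ⊢
  omega

lemma card_nbhd_inter_add_card_nbhd_inter_compl (hc : π c ≠ c) (X : Finset Cell) :
    #(nbhd c (π c) ∩ X) + #(nbhd c (π c) ∩ Xᶜ) = 20 := by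
  rw [← card_nbhd (hπ.row_ne c hc) (hπ.col_ne c hc), ← sdiff_eq_inter_compl,
    card_inter_add_card_sdiff]

lemma two_mul_card_nbhd_inter_compl (hD : ∀ d ∈ D, π d ∈ D)
    (hp : #{d ∈ D | π d ≠ d} = 2 * p) (hc : π c ≠ c) (hcD : c ∈ D) :
    30 + #{d ∈ Dᶜ | π d ≠ d ∧ d ∈ nbhd c (π c) ∧ π d ∈ nbhd c (π c)} =
      2 * p + 2 * #(nbhd c (π c) ∩ {d ∈ Dᶜ | π d ≠ d}) := by
  rw [hπ.two_mul_card_nbhd_inter hc (by simp [hcD]) fun d hd ↦ ?_, filter_filter,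
    ← hπ.card_filter_compl hp]
  · ring
  · simp only [mem_filter, mem_compl] at hd ⊢
    have := hπ.involutive d
    grind

lemma card_nbhd_inter_le (hD : ∀ d ∈ D, π d ∈ D) (hp : #{d ∈ D | π d ≠ d} = 2 * p)
    (hc : π c ≠ c) (hcD : c ∈ D) : #(nbhd c (π c) ∩ D) ≤ p + 5 := by
  have hsplit := hπ.card_nbhd_inter_add_card_nbhd_inter_compl hc D
  have hsub : #(nbhd c (π c) ∩ {d ∈ Dᶜ | π d ≠ d}) ≤ #(nbhd c (π c) ∩ Dᶜ) :=
    card_le_card (inter_subset_inter_left (filter_subset _ _))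
  have := hπ.two_mul_card_nbhd_inter_compl hD hp hc hcD
  omega

lemma card_nbhd_inter_filter_add_le (hD : ∀ d ∈ D, π d ∈ D) (hp : #{d ∈ D | π d ≠ d} = 2 * p)
    (hc : π c ≠ c) (hcD : c ∈ D) :
    2 * #(nbhd c (π c) ∩ {d ∈ D | π d ≠ d}) +
      #{d ∈ Dᶜ | π d ≠ d ∧ d ∈ nbhd c (π c) ∧ π d ∈ nbhd c (π c)} ≤ 2 * p + 2 := by
  have hfixed := hπ.four_le_card_fixed c hc
  have hunion : #(nbhd c (π c) ∩ {d ∈ D | π d ≠ d}) + #(nbhd c (π c) ∩ {d ∈ Dᶜ | π d ≠ d}) +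
      #{d ∈ nbhd c (π c) | π d = d} = 20 := by
    have hcard := card_nbhd (hπ.row_ne c hc) (hπ.col_ne c hc)
    rw [← card_filter_add_card_filter_not (fun d ↦ π d = d),
      ← card_filter_add_card_filter_not (s := {d ∈ nbhd c (π c) | ¬π d = d}) (· ∈ D)] at hcard
    have hin : nbhd c (π c) ∩ {d ∈ D | π d ≠ d} = {d ∈ nbhd c (π c) | ¬π d = d}.filter (· ∈ D) := by
      ext d; simp only [mem_inter, mem_filter]; tauto
    have hout : nbhd c (π c) ∩ {d ∈ Dᶜ | π d ≠ d} =
        {d ∈ nbhd c (π c) | ¬π d = d}.filter (· ∉ D) := by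
      ext d; simp only [mem_inter, mem_filter, mem_compl]; tauto
    rw [hin, hout]
    omega
  have := hπ.two_mul_card_nbhd_inter_compl hD hp hc hcD
  omega

protected lemma conj (σ : Equiv.Perm (Fin 6)) (τ : Equiv.Perm (Fin 7)) :
    IsPairing ((σ.prodCongr τ).conj π) := by
  set e := σ.prodCongr τ with he
  have hconj (c : Cell) : e.conj π (e c) = e (π c) := by simp [Equiv.conj_apply]
  have hadj (c d : Cell) : rook.Adj (e c) (e d) ↔ rook.Adj c d := by simp [he]
  have hnbhd (c d z : Cell) : e z ∈ nbhd (e c) (e d) ↔ z ∈ nbhd c d := by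
    simp only [mem_nbhd, hadj]
  have hcard (X Y : Finset Cell) (h : ∀ d, e d ∈ Y ↔ d ∈ X) : #Y = #X := by
    rw [← card_map e.toEmbedding (s := X)]
    congr 1
    ext d
    obtain ⟨d, rfl⟩ := e.surjective d
    simp [h]
  refine ⟨fun c ↦ ?_, fun c ↦ ?_, fun c ↦ ?_, fun c d ↦ ?_, ?_, fun c ↦ ?_,
    fun A hA hfix ↦ ?_⟩
  · obtain ⟨c, rfl⟩ := e.surjective c
    rw [hconj, hconj, hπ.involutive]
  · obtain ⟨c, rfl⟩ := e.surjective c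
    rw [hconj, ne_eq, e.apply_eq_iff_eq]
    exact fun hc ↦ σ.injective.ne (hπ.row_ne c hc)
  · obtain ⟨c, rfl⟩ := e.surjective c
    rw [hconj, ne_eq, e.apply_eq_iff_eq]
    exact fun hc ↦ τ.injective.ne (hπ.col_ne c hc)
  · obtain ⟨c, rfl⟩ := e.surjective c
    obtain ⟨d, rfl⟩ := e.surjective d
    simpa only [hconj, hnbhd, ne_eq, e.apply_eq_iff_eq] using hπ.mem_nbhd_or_apply_mem_nbhd c d
  · rw [← hπ.card_fixed]
    exact hcard _ _ fun d ↦ by simp only [mem_filter, mem_univ, hconj, e.apply_eq_iff_eq]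
  · obtain ⟨c, rfl⟩ := e.surjective c
    rw [hconj, ne_eq, e.apply_eq_iff_eq]
    refine fun hc ↦ (hπ.four_le_card_fixed c hc).trans_eq (hcard _ _ fun d ↦ ?_).symm
    simp only [mem_filter, hnbhd, hconj, e.apply_eq_iff_eq]
  · let B : Finset Cell := {c | e c ∈ A}
    have hB (c : Cell) : e c ∈ A ↔ c ∈ B := by simp [B]
    rw [hcard B A hB]
    refine hπ.card_le_five_of_isClique B (fun c hc d hd hne ↦ ?_) fun c hc ↦ ?_
    · exact (hadj c d).1 (hA ((hB c).2 hc) ((hB d).2 hd) (e.injective.ne hne))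
    · exact e.injective (hconj c ▸ hfix (e c) ((hB c).2 hc))

lemma exists_not_fixed (j : Fin 7) : ∃ i, π (i, j) ≠ (i, j) := by
  by_contra! hfix
  have hinj : Function.Injective fun i : Fin 6 ↦ ((i, j) : Cell) := Prod.mk_left_injective j
  have hclique : rook.IsClique (univ.image fun i : Fin 6 ↦ ((i, j) : Cell) : Finset Cell) := by
    simp [IsClique, Set.Pairwise]
  have := hπ.card_le_five_of_isClique _ hclique (by simpa using hfix)
  rw [card_image_of_injective _ hinj, card_univ, Fintype.card_fin] at this
  omega

lemma exists_conj_first_column :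
    ∃ (σ : Equiv.Perm (Fin 6)) (τ : Equiv.Perm (Fin 7)),
      ∀ i ≠ 0, (σ.prodCongr τ).conj π (i, 0) ≠ (i, 0) := by
  obtain ⟨j, -, hj⟩ : ∃ j ∈ (univ : Finset (Fin 7)), #{c ∈ {c | π c = c} | c.2 = j} < 2 :=
    exists_card_fiber_lt_of_card_lt_mul (by rw [hπ.card_fixed]; decide)
  obtain ⟨i, hi⟩ : ∃ i, ∀ k, π (k, j) = (k, j) → k = i := by
    by_cases h : ∃ i, π (i, j) = (i, j)
    · obtain ⟨i, hi⟩ := h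
      refine ⟨i, fun k hk ↦ ?_⟩
      have := card_le_one.1 (Nat.lt_succ_iff.1 hj) (k, j) (by simpa using hk) (i, j)
        (by simpa using hi)
      exact (Prod.ext_iff.1 this).1
    · exact ⟨0, fun k hk ↦ (h ⟨k, hk⟩).elim⟩
  refine ⟨Equiv.swap i 0, Equiv.swap j 0, fun k hk h ↦ hk ?_⟩
  set e := (Equiv.swap i 0).prodCongr (Equiv.swap j 0) with he
  have hek : e.symm (k, 0) = (Equiv.swap i 0 k, j) := by simp [he]
  rw [Equiv.conj_apply, ← Equiv.eq_symm_apply, hek] at h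
  simpa [Equiv.swap_apply_eq_iff] using hi _ h

end IsPairing

end Pairing

section PairingOfColouring

variable {C : Type*} {f : Cell → C} {Q : Finset C} {π : Cell → Cell}

lemma IsPartnerMap.mem_nbhd_or_apply_mem_nbhd (hπ : IsPartnerMap f Q π)
    (hf : IsProperComplete rook f) {c d : Cell} (hc : f c ∈ Q) (hd : f d ∈ Q) (hdc : d ≠ c)
    (hdπ : d ≠ π c) : d ∈ nbhd c (π c) ∨ π d ∈ nbhd c (π c) := by
  have hne : f d ≠ f c := fun h ↦ (hπ.eq_or_eq_apply c d hc h).elim hdc hdπ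
  obtain ⟨w, hw, hwd⟩ := hπ.exists_adj_or_adj hf hc hne
  obtain rfl | rfl := hπ.eq_or_eq_apply d w hd hwd
  exacts [.inl (mem_nbhd.2 hw), .inr (mem_nbhd.2 hw)]

lemma IsPartnerMap.row_ne_and_col_ne (hπ : IsPartnerMap f Q π) (hf : IsProperComplete rook f)
    {c : Cell} (hc : π c ≠ c) : c.1 ≠ (π c).1 ∧ c.2 ≠ (π c).2 := by
  have hadj := hπ.not_adj hf c
  have hext := mt Prod.ext_iff.2 hc
  rw [rook_adj] at hadj
  grind

variable [Fintype C]

lemma two_le_card_colourClass [DecidableEq C] (hf : IsProperComplete rook f)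
    (hC : 13 ≤ Fintype.card C) (d : C) :
    2 ≤ #(colourClass f d) := by
  obtain ⟨v, rfl⟩ := hf.2.1 d
  by_contra! hlt
  have hmem : v ∈ colourClass f (f v) := mem_colourClass.2 rfl
  have hsingle : colourClass f (f v) = {v} :=
    eq_singleton_iff_unique_mem.2 ⟨hmem, fun w hw ↦ card_le_one.1 (by omega) w hw v hmem⟩
  have := card_le_degree_add_one hf hsingle
  rw [degree_rook] at this
  omega

/-- A pair and the crossing of its lines see one colour twice, so the `20` cells around a second
pair through that crossing carry at most `19` colours. -/
lemma card_le_twenty (hf : IsProperComplete rook f) : Fintype.card C ≤ 20 := by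
  classical
  by_contra! hC
  have htwo := two_le_card_colourClass hf (by omega)
  have huniv : ({c | #(colourClass f c) = 2} : Finset C) = univ := by
    refine eq_univ_of_card _ ((card_le_univ _).antisymm ?_)
    have := three_mul_card_le htwo
    simp only [Fintype.card_prod, Fintype.card_fin] at this
    omega
  have hcard (c : C) : #(colourClass f c) = 2 := by simpa using huniv.ge (mem_univ c)
  obtain ⟨π, hπ⟩ := exists_isPartnerMap f (Q := univ) fun c _ ↦ hcard c
  have hmoved (c : Cell) : π c ≠ c := by simp [hπ.apply_eq_self_iff]
  set x : Cell := (0, 0)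
  obtain ⟨hrow, hcol⟩ := hπ.row_ne_and_col_ne hf (hmoved x)
  set z : Cell := (x.1, (π x).2)
  obtain ⟨hzrow, hzcol⟩ := hπ.row_ne_and_col_ne hf (hmoved z)
  have hx : x ∈ nbhd z (π z) := mem_nbhd.2 (.inl (rook_adj.2 (.inr ⟨hcol.symm, rfl⟩)))
  have hπx : π x ∈ nbhd z (π z) := mem_nbhd.2 (.inl (rook_adj.2 (.inl ⟨hrow, rfl⟩)))
  have hcover : univ.erase (f z) ⊆ ((nbhd z (π z)).erase x).image f := fun d hd ↦ by
    obtain ⟨w, hw, rfl⟩ := hπ.exists_adj_or_adj hf (mem_univ _) (ne_of_mem_erase hd)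
    by_cases hwx : w = x
    · exact mem_image.2 ⟨π x, mem_erase.2 ⟨hmoved x, hπx⟩, by rw [hπ.colour_apply, hwx]⟩
    · exact mem_image_of_mem f (mem_erase.2 ⟨hwx, mem_nbhd.2 hw⟩)
  have := (card_le_card hcover).trans card_image_le
  rw [card_erase_of_mem (mem_univ _), card_univ, card_erase_of_mem hx, card_nbhd hzrow hzcol]
    at this
  omega

lemma IsPartnerMap.four_le_card_fixed [DecidableEq C] (hπ : IsPartnerMap f Q π)
    (hf : IsProperComplete rook f) (hQ : 4 ≤ #Qᶜ) {c : Cell} (hc : f c ∈ Q) :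
    4 ≤ #{d ∈ nbhd c (π c) | π d = d} := by
  refine hQ.trans ((card_le_card fun d hd ↦ ?_).trans (card_image_le (f := f)))
  have hne : d ≠ f c := fun h ↦ mem_compl.1 hd (h ▸ hc)
  obtain ⟨w, hw, rfl⟩ := hπ.exists_adj_or_adj hf hc hne
  exact mem_image_of_mem f <|
    mem_filter.2 ⟨mem_nbhd.2 hw, (hπ.apply_eq_self_iff w).2 (mem_compl.1 hd)⟩

lemma IsPartnerMap.card_le_of_isClique [DecidableEq C] (hπ : IsPartnerMap f Q π)
    (hf : IsProperComplete rook f) {A : Finset Cell} (hA : rook.IsClique A)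
    (hfix : ∀ c ∈ A, π c = c) : #A ≤ #Qᶜ := by
  refine card_le_card_of_injOn f (fun c hc ↦ ?_) fun c hc d hd h ↦ ?_
  · exact mem_coe.2 (mem_compl.2 ((hπ.apply_eq_self_iff c).1 (hfix c hc)))
  · by_contra hne
    exact hf.1 c d (hA hc hd hne) h

theorem exists_isPairing (hf : IsProperComplete rook f) (hC : 19 ≤ Fintype.card C) :
    ∃ π, IsPairing π := by
  classical
  have htwo := two_le_card_colourClass hf (by omega)
  have hcount := three_mul_card_le htwo
  simp only [Fintype.card_prod, Fintype.card_fin] at hcount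
  obtain ⟨Q, hQsub, hQ⟩ := exists_subset_card_eq
    (show 15 ≤ #({c | #(colourClass f c) = 2} : Finset C) by omega)
  have hQtwo : ∀ c ∈ Q, #(colourClass f c) = 2 := fun c hc ↦ by simpa using hQsub hc
  obtain ⟨π, hπ⟩ := exists_isPartnerMap f hQtwo
  have hmem {c : Cell} (hc : π c ≠ c) : f c ∈ Q := not_not.1 ((hπ.apply_eq_self_iff c).not.1 hc)
  have hQc : #Qᶜ = Fintype.card C - 15 := by rw [card_compl, hQ]
  have := card_le_twenty hf
  refine ⟨π, hπ.involutive, fun c hc ↦ (hπ.row_ne_and_col_ne hf hc).1,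
    fun c hc ↦ (hπ.row_ne_and_col_ne hf hc).2,
    fun c d hc hd ↦ hπ.mem_nbhd_or_apply_mem_nbhd hf (hmem hc) (hmem hd), ?_,
    fun c hc ↦ hπ.four_le_card_fixed hf (by omega) (hmem hc), ?_⟩
  · have hpaired : #{c | f c ∈ Q} = 30 := by
      rw [← sum_card_colourClass, sum_congr rfl hQtwo, sum_const, hQ, smul_eq_mul]
    have hall := card_filter_add_card_filter_not (s := univ) fun c ↦ f c ∈ Q
    simp only [hπ.apply_eq_self_iff]
    have hcard : #(univ : Finset Cell) = 42 := rfl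
    omega
  · exact fun A hA hfix ↦ (hπ.card_le_of_isClique hf hA hfix).trans (by omega)

end PairingOfColouring

section Encoding

/-- The position of a cell in the encodings below, counted column by column. -/
def index (c : Cell) : ℕ := 6 * c.2 + c.1

lemma index_lt (c : Cell) : index c < 42 := by unfold index; omega

lemma index_mod (c : Cell) : index c % 6 = c.1 := by unfold index; omega

lemma index_div (c : Cell) : index c / 6 = c.2 := by unfold index; omega

lemma index_injective : Function.Injective index := fun c d h ↦ by
  refine Prod.ext (Fin.ext ?_) (Fin.ext ?_)
  · rw [← index_mod, h, index_mod]
  · rw [← index_div, h, index_div]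

lemma exists_index_eq {k : ℕ} (hk : k < 42) : ∃ c, index c = k :=
  ⟨(⟨k % 6, by omega⟩, ⟨k / 6, by omega⟩), by simp only [index]; omega⟩

/-- The set of cells encoded by the number `m`, whose bit at `index c` says whether `c` belongs
to the set. -/
def cells (m : ℕ) : Finset Cell := {c | m.testBit (index c)}

@[simp]
lemma mem_cells {m : ℕ} {c : Cell} : c ∈ cells m ↔ m.testBit (index c) = true := by
  simp [cells]

lemma cells_land (m n : ℕ) : cells (m.land n) = cells m ∩ cells n := by
  ext c
  simp

lemma cells_lor (m n : ℕ) : cells (m.lor n) = cells m ∪ cells n := by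
  ext c
  simp

lemma cells_xor (m n : ℕ) : cells (m.xor n) = symmDiff (cells m) (cells n) := by
  ext c
  simp only [mem_cells, mem_symmDiff, show m.xor n = m ^^^ n from rfl, Nat.testBit_xor]
  cases m.testBit (index c) <;> cases n.testBit (index c) <;> simp

lemma cells_two_pow (c : Cell) : cells (2 ^ index c) = {c} := by
  ext d
  simp [Nat.testBit_two_pow, index_injective.eq_iff, eq_comm]

/-- The number below `2 ^ n` whose bits are the values of `q`. -/
def mask (q : ℕ → Bool) : ℕ → ℕ
  | 0 => 0
  | n + 1 => bif q n then mask q n ||| 2 ^ n else mask q n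

lemma testBit_mask (q : ℕ → Bool) (n k : ℕ) : (mask q n).testBit k = (decide (k < n) && q k) := by
  induction n with
  | zero => simp [mask]
  | succ n ih =>
    obtain hk | rfl | hk := lt_trichotomy k n
    · have hk' : k < n + 1 := by omega
      cases hq : q n <;> simp [mask, hq, ih, hk, hk', hk.ne']
    · cases hq : q k <;> simp [mask, hq, ih]
    · have hk' : ¬ k < n + 1 := by omega
      cases hq : q n <;> simp [mask, hq, ih, hk.not_gt, hk', hk.ne]

lemma mem_cells_mask {q : ℕ → Bool} {c : Cell} : c ∈ cells (mask q 42) ↔ q (index c) = true := by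
  simp [testBit_mask, index_lt]

/-- The code of the set of all cells. -/
def full : ℕ := 2 ^ 42 - 1

lemma cells_full : cells full = univ := by
  ext c
  simp only [full, mem_cells, Nat.testBit_two_pow_sub_one, index_lt, decide_true, mem_univ]

/-- The code of the cells in the same row or column as the cell `x`, except `x`. -/
def line (x : ℕ) : ℕ := mask (fun k ↦ (k % 6 == x % 6) ^^ (k / 6 == x / 6)) 42

lemma mem_cells_line {c d : Cell} : d ∈ cells (line (index c)) ↔ rook.Adj c d := by
  rw [line, mem_cells_mask, rook_adj]
  simp only [index_mod, index_div]
  grind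

/-- The code of `nbhd`. -/
def nbrs (x y : ℕ) : ℕ := line x ||| line y

lemma cells_nbrs (c d : Cell) : cells (nbrs (index c) (index d)) = nbhd c d := by
  ext z
  rw [nbrs, mem_nbhd, ← mem_cells_line, ← mem_cells_line, ← mem_union]
  exact (congrArg (z ∈ ·) (cells_lor _ _)).to_iff

/-- The code of the cells in rows at most `r` and columns at most `s`. -/
def block (r s : ℕ) : ℕ := mask (fun k ↦ (k % 6).ble r && (k / 6).ble s) 42

lemma mem_cells_block {r s : ℕ} {c : Cell} : c ∈ cells (block r s) ↔ c.1 ≤ r ∧ c.2 ≤ s := by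
  rw [block, mem_cells_mask, index_mod, index_div]
  simp

end Encoding

section Popcount

/-- The code of the first row. -/
def firstRow : ℕ := mask (fun k ↦ k % 6 == 0) 42

lemma mem_cells_firstRow_shiftLeft {i : Fin 6} {c : Cell} :
    c ∈ cells (firstRow.shiftLeft i) ↔ c.1 = i := by
  have hindex := index_lt c
  rw [mem_cells, show firstRow.shiftLeft i = firstRow <<< (i : ℕ) from rfl,
    Nat.testBit_shiftLeft, firstRow, testBit_mask]
  rw [Bool.and_eq_true, Bool.and_eq_true, decide_eq_true_eq, decide_eq_true_eq, beq_iff_eq]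
  unfold index at hindex ⊢
  omega

/-- The number of cells encoded by `m < 2 ^ 42`, each row being summed modulo `2 ^ 6 - 1`. -/
def popcount (m : ℕ) : ℕ :=
  ((m.land firstRow).add <| ((m.shiftRight 1).land firstRow).add <|
    ((m.shiftRight 2).land firstRow).add <| ((m.shiftRight 3).land firstRow).add <|
    ((m.shiftRight 4).land firstRow).add <| (m.shiftRight 5).land firstRow).mod 63

lemma shiftRight_land_firstRow_modEq (m : ℕ) (i : Fin 6) :
    (m.shiftRight i).land firstRow ≡ #{c ∈ cells m | c.1 = i} [MOD 63] := by
  have hbits : ((m.shiftRight i).land firstRow).bitIndices.toFinset =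
      {c ∈ cells m | c.1 = i}.image fun c ↦ 6 * (c.2 : ℕ) := by
    ext k
    simp only [List.mem_toFinset, Nat.mem_bitIndices, mem_image, mem_filter, mem_cells,
      Nat.land_eq, Nat.shiftRight_eq, Nat.testBit_and, Nat.testBit_shiftRight, firstRow,
      testBit_mask, Bool.and_eq_true, decide_eq_true_eq, beq_iff_eq, index]
    constructor
    · rintro ⟨hm, hk, hmod⟩
      have hdiv : 6 * (k / 6) = k := by omega
      exact ⟨(i, ⟨k / 6, by omega⟩), ⟨by rwa [hdiv, add_comm], rfl⟩, hdiv⟩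
    · rintro ⟨c, ⟨hm, rfl⟩, rfl⟩
      exact ⟨by rwa [add_comm], by omega, by omega⟩
  have hinj : Set.InjOn (fun c : Cell ↦ 6 * (c.2 : ℕ))
      (({c ∈ cells m | c.1 = i} : Finset Cell) : Set Cell) :=
    fun c hc d hd h ↦ Prod.ext (by grind) (by grind)
  rw [← sum_toFinset_bitIndices_two_pow ((m.shiftRight i).land firstRow), hbits,
    sum_image hinj, card_eq_sum_ones]
  refine Nat.ModEq.sum fun c _ ↦ ?_
  rw [pow_mul]
  exact (show 2 ^ 6 ≡ 1 [MOD 63] from rfl).pow c.2 |>.trans (by rw [one_pow])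

lemma popcount_le (m : ℕ) : popcount m ≤ #(cells m) := by
  have hsum : #(cells m) = ∑ i : Fin 6, #{c ∈ cells m | c.1 = i} :=
    card_eq_sum_card_fiberwise fun _ _ ↦ mem_coe.2 (mem_univ _)
  have hmod : popcount m = #(cells m) % 63 := by
    have h := shiftRight_land_firstRow_modEq m
    rw [hsum, Fin.sum_univ_six, add_assoc, add_assoc, add_assoc, add_assoc]
    exact (h 0).add <| (h 1).add <| (h 2).add <| (h 3).add <| (h 4).add (h 5)
  exact hmod ▸ Nat.mod_le _ _

end Popcount

section Board

/-- The offset at which a board stores its entry for the cell `x`. The stride exceeds `42` so that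
carries and residues in `nonemptyEntries` and `squash` do not mix neighbouring entries. -/
def slot (x : ℕ) : ℕ := Nat.mul 44 x.succ

/-- A board packs a set of cells, in its lowest `42` bits, and one further set of cells for each
cell into a single number. The search keeps there the undecided cells and the possible partners of
each of them. -/
def board (U : ℕ) (F : ℕ → ℕ) : ℕ → ℕ
  | 0 => U
  | n + 1 => board U F n ||| F n <<< slot n

lemma testBit_board_of_lt (U : ℕ) (F : ℕ → ℕ) (n : ℕ) {i : ℕ} (hi : i < 44) :
    (board U F n).testBit i = U.testBit i := by
  induction n with
  | zero => rfl
  | succ n ih =>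
    have : ¬ slot n ≤ i := by simp only [slot, Nat.mul_eq]; omega
    simp [board, ih, this]

lemma testBit_board_slot_add (U : ℕ) {F : ℕ → ℕ} {n k i : ℕ} (hk : k < n)
    (hi : (F k).testBit i = true) : (board U F n).testBit (slot k + i) = true := by
  induction n with
  | zero => omega
  | succ n ih =>
    obtain rfl | hk := Nat.lt_succ_iff_lt_or_eq.1 hk |>.symm
    · simp [board, hi]
    · simp [board, ih hk]

/-- The undecided cells of the board `M`. -/
def undecided (M : ℕ) : ℕ := M.mod (Nat.pow 2 42)

/-- The decided cells of the board `M`. -/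
def decided (M : ℕ) : ℕ := full.xor (undecided M)

/-- The possible partners of the cell `x` in the board `M`. -/
def candidates (M x : ℕ) : ℕ := (M.shiftRight (slot x)).mod (Nat.pow 2 42)

lemma undecided_lt (M : ℕ) : undecided M < 2 ^ 42 := Nat.mod_lt M (by decide)

lemma cells_mod (m : ℕ) : cells (m.mod (Nat.pow 2 42)) = cells m := by
  ext c
  rw [mem_cells, mem_cells, show m.mod (Nat.pow 2 42) = m % 2 ^ 42 from rfl,
    Nat.testBit_mod_two_pow]
  simp [index_lt]

lemma cells_undecided (M : ℕ) : cells (undecided M) = cells M := cells_mod M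

lemma cells_decided (M : ℕ) : cells (decided M) = (cells M)ᶜ := by
  rw [decided, cells_xor, cells_full, cells_undecided]
  exact top_symmDiff _

lemma mem_cells_candidates {M x : ℕ} {c : Cell} :
    c ∈ cells (candidates M x) ↔ M.testBit (slot x + index c) = true := by
  rw [candidates, cells_mod, mem_cells, Nat.shiftRight_eq, Nat.testBit_shiftRight]

lemma cells_board (U : ℕ) (F : ℕ → ℕ) (n : ℕ) : cells (board U F n) = cells U := by
  ext c
  rw [mem_cells, mem_cells, testBit_board_of_lt U F n (by have := index_lt c; omega)]

lemma cells_candidates_board (U : ℕ) (F : ℕ → ℕ) (c : Cell) :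
    cells (F (index c)) ⊆ cells (candidates (board U F 42) (index c)) := fun _ hd ↦
  mem_cells_candidates.2 (testBit_board_slot_add U (index_lt c) (mem_cells.1 hd))

lemma cells_candidates_land (M B x : ℕ) :
    cells (candidates (M.land B) x) = cells (candidates M x) ∩ cells (candidates B x) := by
  ext c
  simp only [mem_inter, mem_cells_candidates, Nat.land_eq, Nat.testBit_and, Bool.and_eq_true]

lemma candidates_xor {M e : ℕ} (he : e < 2 ^ 42) (x : ℕ) :
    candidates (M.xor e) x = candidates M x := by
  have hslot : 2 ^ 42 ≤ 2 ^ slot x := Nat.pow_le_pow_right two_pos (by simp [slot]; omega)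
  have hshift : e >>> slot x = 0 := by
    rw [Nat.shiftRight_eq_div_pow, Nat.div_eq_of_lt (he.trans_le hslot)]
  simp [candidates, Nat.shiftRight_xor_distrib, hshift]

/-- `k n`, in a form whose reduction first evaluates `n` to a numeral. The definitions below also
use the functions on `Nat` that the kernel evaluates with binary arithmetic in place of the usual
notation, and recursors for the innermost loops. -/
def force {α : Type} (n : ℕ) (k : ℕ → α) : α := Nat.rec (k 0) (fun m _ ↦ k m.succ) n

@[simp]
lemma force_eq {α : Type} (n : ℕ) (k : ℕ → α) : force n k = k n := by
  cases n <;> rfl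

/-- `if b then t else e`, in a form that reduces in a single step. -/
def select {α : Type} (b : Bool) (t e : α) : α := Bool.rec e t b

lemma select_eq {α : Type} (b : Bool) (t e : α) : select b t e = if b then t else e := by
  cases b <;> rfl

/-- The board of all cells in which no cell has the partner `x` and `x` is decided. -/
def without (x : ℕ) : ℕ := force (full ^^^ 2 ^ x) fun a ↦ board a (fun _ ↦ a) 42

/-- The board in which the pair `x`, `y` is decided and each further pair meets `nbrs x y`. -/
def compatible (x y : ℕ) : ℕ :=
  force (nbrs x y) fun N ↦ force (full ^^^ 2 ^ x ^^^ 2 ^ y) fun a ↦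
    board a (fun u ↦ bif N.testBit u then a else N) 42

lemma mem_cells_full_xor {c d z : Cell} (hcd : c ≠ d) :
    z ∈ cells (full ^^^ 2 ^ index c ^^^ 2 ^ index d) ↔ z ≠ c ∧ z ≠ d := by
  rw [← Nat.xor_eq, ← Nat.xor_eq, cells_xor, cells_xor, cells_full, cells_two_pow, cells_two_pow]
  simp only [mem_symmDiff, mem_univ, mem_singleton]
  grind

lemma mem_cells_compatible {c d z : Cell} (hcd : c ≠ d) :
    z ∈ cells (compatible (index c) (index d)) ↔ z ≠ c ∧ z ≠ d := by
  simp only [compatible, force_eq, cells_board, mem_cells_full_xor hcd]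

lemma mem_cells_candidates_compatible {c d w z : Cell} (hcd : c ≠ d)
    (h : w ∈ nbhd c d ∧ z ≠ c ∧ z ≠ d ∨ w ∉ nbhd c d ∧ z ∈ nbhd c d) :
    z ∈ cells (candidates (compatible (index c) (index d)) (index w)) := by
  simp only [compatible, force_eq]
  refine cells_candidates_board _ _ w ?_
  rw [← cells_nbrs, mem_cells (c := w), cells_nbrs] at h
  cases hw : (nbrs (index c) (index d)).testBit (index w) with
  | true => rw [cond_true, mem_cells_full_xor hcd]; grind
  | false => rw [cond_false, cells_nbrs]; grind

/-- The board in which no pair lies inside `N`. -/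
def undoubled (N : ℕ) : ℕ :=
  force (full ^^^ N) fun a ↦ board full (fun u ↦ bif N.testBit u then a else full) 42

/-- The board of all cells in which the partner of a cell lies in another row and column. -/
def initialBoard : ℕ := board full (fun u ↦ full ^^^ line u ^^^ 2 ^ u) 42

end Board

section Invariant

/-- The code of the first column without its first cell. -/
def firstColumn : ℕ := mask (fun k ↦ k != 0 && k / 6 == 0) 42

/-- The set `S` contains no full column and, in the first column, at most the first cell. -/
def columnsOk (S : ℕ) : Bool :=
  Nat.beq (S.land firstColumn) 0 &&
    Nat.beq (firstRow.land <| S.land <| (S.shiftRight 1).land <| (S.shiftRight 2).land <|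
      (S.shiftRight 3).land <| (S.shiftRight 4).land <| S.shiftRight 5) 0

/-- Each of the sets `ps` has at most `b` cells in `D`. -/
def loadsOk (D b : ℕ) (ps : List ℕ) : Bool :=
  List.rec true (fun N _ ih ↦ select (Nat.ble (popcount (N.land D)) b) ih false) ps

/-- The invariant of the search: `π` is a pairing, normalised on the first column, for which the
undecided cells of the board `M` are a union of pairs and fixed cells, `S` consists of the decided
fixed cells, `p` pairs are decided, and `ps` lists the neighbourhoods of some of these. -/
structure Valid (π : Cell → Cell) (M S : ℕ) (ps : List ℕ) (p : ℕ) : Prop where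
  isPairing : IsPairing π
  first_column : ∀ i ≠ 0, π (i, 0) ≠ (i, 0)
  apply_mem : ∀ c ∈ cells M, π c ∈ cells M
  mem_cells_iff : ∀ c, c ∈ cells S ↔ c ∉ cells M ∧ π c = c
  card_paired : #{c ∈ (cells M)ᶜ | π c ≠ c} = 2 * p
  exists_pair : ∀ N ∈ ps, ∃ c ∉ cells M, π c ≠ c ∧ cells N = nbhd c (π c)
  apply_mem_candidates : ∀ c ∈ cells M, π c ≠ c → π c ∈ cells (candidates M (index c))

namespace Valid

variable {π : Cell → Cell} {M S : ℕ} {ps : List ℕ} {p : ℕ} (h : Valid π M S ps p)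
include h

lemma apply_mem_compl (c : Cell) (hc : c ∈ (cells M)ᶜ) : π c ∈ (cells M)ᶜ :=
  mem_compl.2 fun hπc ↦ mem_compl.1 hc (h.isPairing.involutive c ▸ h.apply_mem _ hπc)

lemma popcount_land_le {N D : ℕ} (hN : N ∈ ps) (hD : cells D ⊆ (cells M)ᶜ) :
    popcount (N.land D) ≤ p + 5 := by
  obtain ⟨c, hcM, hc, hcells⟩ := h.exists_pair N hN
  refine (popcount_le _).trans ?_
  rw [cells_land, hcells]
  exact (card_le_card (inter_subset_inter_left hD)).trans <|
    h.isPairing.card_nbhd_inter_le h.apply_mem_compl h.card_paired hc (mem_compl.2 hcM)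

lemma loadsOk : loadsOk (decided M) (p.add 5) ps = true := by
  have hle := fun N hN ↦ h.popcount_land_le (N := N) hN (cells_decided M).subset
  clear h
  induction ps with
  | nil => rfl
  | cons N ps ih =>
    have hN : Nat.ble (popcount (N.land (decided M))) (p.add 5) = true :=
      Nat.ble_eq ▸ hle N List.mem_cons_self
    simp only [RookColouring.loadsOk, select_eq] at ih ⊢
    rw [if_pos hN, ih fun N' hN' ↦ hle N' (List.mem_cons_of_mem N hN')]

lemma columnsOk : columnsOk S = true := by
  have hfix (c : Cell) (hc : S.testBit (index c) = true) : π c = c :=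
    ((h.mem_cells_iff c).1 (mem_cells.2 hc)).2
  rw [RookColouring.columnsOk, Bool.and_eq_true, Nat.beq_eq, Nat.beq_eq]
  constructor <;> refine Nat.eq_of_testBit_eq fun k ↦ ?_ <;>
    rw [Nat.zero_testBit, Bool.eq_false_iff] <;> intro hk
  · simp only [Nat.land_eq, Nat.testBit_and, firstColumn, testBit_mask, Bool.and_eq_true,
      decide_eq_true_eq, bne_iff_ne, beq_iff_eq] at hk
    obtain ⟨hS, hk42, hk0, hdiv⟩ := hk
    obtain ⟨⟨i, j⟩, rfl⟩ := exists_index_eq hk42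
    rw [index_div] at hdiv
    obtain rfl : j = 0 := Fin.ext hdiv
    exact h.first_column i (fun hi ↦ hk0 (by simp [hi, index])) (hfix _ hS)
  · simp only [Nat.land_eq, Nat.shiftRight_eq, Nat.testBit_and, Nat.testBit_shiftRight, firstRow,
      testBit_mask, Bool.and_eq_true, decide_eq_true_eq, beq_iff_eq] at hk
    obtain ⟨⟨hk42, hmod⟩, h0, h1, h2, h3, h4, h5⟩ := hk
    obtain ⟨i, hi⟩ := h.isPairing.exists_not_fixed ⟨k / 6, by omega⟩
    refine hi (hfix _ ?_)
    have hindex : index (i, ⟨k / 6, by omega⟩) = i + k := by simp only [index]; omega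
    rw [hindex]
    fin_cases i <;> simpa

lemma popcount_row_le {c : Cell} (hcM : c ∈ cells M) (hc : π c = c) :
    popcount (S.land (firstRow.shiftLeft c.1)) ≤ 4 := by
  set A := cells (S.land (firstRow.shiftLeft c.1)) with hAdef
  have hA (d : Cell) : d ∈ A ↔ (d ∉ cells M ∧ π d = d) ∧ d.1 = c.1 := by
    rw [hAdef, cells_land, mem_inter, h.mem_cells_iff, mem_cells_firstRow_shiftLeft]
  have hcA : c ∉ A := fun hcA ↦ ((hA c).1 hcA).1.1 hcM
  have hrow : ∀ d ∈ insert c A, d.1 = c.1 := by simp_all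
  have hclique : rook.IsClique (insert c A : Finset Cell) := fun d hd e he hne ↦ by
    have hde := (hrow d hd).trans (hrow e he).symm
    exact rook_adj.2 (.inr ⟨fun hcol ↦ hne (Prod.ext hde hcol), hde⟩)
  have hcard := h.isPairing.card_le_five_of_isClique _ hclique (by simp_all)
  rw [card_insert_of_notMem hcA] at hcard
  exact (popcount_le _).trans (Nat.le_of_succ_le_succ hcard)

lemma two_mul_popcount_add_le {N P : ℕ} (hN : N ∈ ps) (hP : cells P = (cells M)ᶜ \ cells S) :
    2 * popcount (N.land P) + #{d ∈ cells M | π d ≠ d ∧ d ∈ cells N ∧ π d ∈ cells N} ≤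
      2 * p + 2 := by
  obtain ⟨c, hcM, hc, hcells⟩ := h.exists_pair N hN
  have hpaired : cells P = {d ∈ (cells M)ᶜ | π d ≠ d} := by
    ext d
    rw [hP, mem_sdiff, mem_filter, mem_compl, h.mem_cells_iff]
    tauto
  have hle := h.isPairing.card_nbhd_inter_filter_add_le h.apply_mem_compl h.card_paired hc
    (mem_compl.2 hcM)
  have hcount := popcount_le (N.land P)
  rw [cells_land, hpaired, hcells] at hcount
  rw [compl_compl] at hle
  rw [hcells]
  omega

lemma land_board {U : ℕ} {F : ℕ → ℕ} (hU : cells M ⊆ cells U)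
    (hF : ∀ c ∈ cells M, π c ≠ c → π c ∈ cells (F (index c))) :
    Valid π (M.land (board U F 42)) S ps p := by
  have hcells : cells (M.land (board U F 42)) = cells M := by
    rw [cells_land, cells_board, inter_eq_left.2 hU]
  refine ⟨h.isPairing, h.first_column, ?_, ?_, ?_, ?_, fun c hc hne ↦ ?_⟩
  · simpa only [hcells] using h.apply_mem
  · simpa only [hcells] using h.mem_cells_iff
  · simpa only [hcells] using h.card_paired
  · simpa only [hcells] using h.exists_pair
  · rw [hcells] at hc
    rw [cells_candidates_land, mem_inter]
    exact ⟨h.apply_mem_candidates c hc hne, cells_candidates_board U F c (hF c hc hne)⟩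

lemma land_without {c : Cell} (hcM : c ∉ cells M) (hc : π c = c) :
    Valid π (M.land (without (index c))) S ps p := by
  have hcells : cells (full ^^^ 2 ^ index c) = {c}ᶜ := by
    rw [← Nat.xor_eq, cells_xor, cells_full, cells_two_pow]
    exact top_symmDiff _
  rw [without, force_eq]
  refine h.land_board (fun d hd ↦ ?_) fun d _ hne ↦ ?_ <;> rw [hcells, mem_compl, mem_singleton]
  · exact fun hdc ↦ hcM (hdc ▸ hd)
  · exact fun hdc ↦ hne (h.isPairing.involutive.injective (hdc ▸ hc))

lemma land_undoubled {N : ℕ} (hN : ∀ c ∈ cells M, π c ≠ c → c ∈ cells N → π c ∉ cells N) :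
    Valid π (M.land (undoubled N)) S ps p := by
  rw [undoubled, force_eq]
  refine h.land_board (by simp [cells_full]) fun c hc hne ↦ ?_
  cases hcN : N.testBit (index c) with
  | true =>
    rw [cond_true, ← Nat.xor_eq, cells_xor, cells_full]
    exact (top_symmDiff (cells N)).symm ▸ mem_compl.2 (hN c hc hne (mem_cells.2 hcN))
  | false => simp [cells_full]

lemma xor_singles {e : ℕ} (he : e < 2 ^ 42) (hsub : cells e ⊆ cells M)
    (hfix : ∀ c ∈ cells e, π c = c) : Valid π (M.xor e) (S.lor e) ps p := by
  have hmem (c : Cell) : c ∈ cells (M.xor e) ↔ c ∈ cells M ∧ c ∉ cells e := by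
    rw [cells_xor, mem_symmDiff]
    have := @hsub c
    tauto
  have hpaired : {c ∈ (cells (M.xor e))ᶜ | π c ≠ c} = {c ∈ (cells M)ᶜ | π c ≠ c} := by
    ext c
    simp only [mem_filter, mem_compl, hmem]
    have := hfix c
    tauto
  refine ⟨h.isPairing, h.first_column, fun c hc ↦ ?_, fun c ↦ ?_, hpaired ▸ h.card_paired,
    fun N hN ↦ ?_, fun c hc hne ↦ ?_⟩
  · rw [hmem] at hc ⊢
    refine ⟨h.apply_mem c hc.1, fun hπc ↦ hc.2 ?_⟩
    rwa [← hfix _ hπc, h.isPairing.involutive] at hπc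
  · rw [cells_lor, mem_union, h.mem_cells_iff, hmem]
    have := hfix c
    have := @hsub c
    tauto
  · obtain ⟨c, hcM, hc⟩ := h.exists_pair N hN
    exact ⟨c, fun hc' ↦ hcM ((hmem c).1 hc').1, hc⟩
  · rw [candidates_xor he]
    exact h.apply_mem_candidates c ((hmem c).1 hc).1 hne

lemma land_compatible {c : Cell} (hcM : c ∈ cells M) (hc : π c ≠ c) :
    Valid π (M.land (compatible (index c) (index (π c)))) S
      (nbrs (index c) (index (π c)) :: ps) p.succ := by
  set M' := M.land (compatible (index c) (index (π c)))
  have hinv := h.isPairing.involutive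
  have hmem (d : Cell) : d ∈ cells M' ↔ d ∈ cells M ∧ d ≠ c ∧ d ≠ π c := by
    rw [cells_land, mem_inter, mem_cells_compatible hc.symm]
  have hpaired : {d ∈ (cells M')ᶜ | π d ≠ d} =
      insert c (insert (π c) {d ∈ (cells M)ᶜ | π d ≠ d}) := by
    ext d
    simp only [mem_filter, mem_compl, mem_insert, hmem]
    have := hinv c
    grind
  refine ⟨h.isPairing, h.first_column, fun d hd ↦ ?_, fun d ↦ ?_, ?_, fun N hN ↦ ?_,
    fun d hd hne ↦ ?_⟩
  · rw [hmem] at hd ⊢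
    exact ⟨h.apply_mem d hd.1, hinv.eq_iff.not.2 hd.2.2, hinv.injective.ne hd.2.1⟩
  · rw [h.mem_cells_iff, hmem]
    have := hinv c
    grind
  · have := h.apply_mem c hcM
    rw [hpaired, card_insert_of_notMem (by simp [hcM, hc.symm]),
      card_insert_of_notMem (by simp_all), h.card_paired]
    omega
  · obtain rfl | hN := List.mem_cons.1 hN
    · exact ⟨c, by simp [hmem], hc, cells_nbrs c (π c)⟩
    · obtain ⟨d, hdM, hd⟩ := h.exists_pair N hN
      exact ⟨d, fun hd' ↦ hdM ((hmem d).1 hd').1, hd⟩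
  · obtain ⟨hdM, hdc, hdπ⟩ := (hmem d).1 hd
    rw [cells_candidates_land, mem_inter]
    refine ⟨h.apply_mem_candidates d hdM hne, mem_cells_candidates_compatible hc.symm ?_⟩
    by_cases hdN : d ∈ nbhd c (π c)
    · exact .inl ⟨hdN, hinv.eq_iff.not.2 hdπ, hinv.injective.ne hdc⟩
    · exact .inr ⟨hdN, (h.isPairing.mem_nbhd_or_apply_mem_nbhd c d hc hne hdc hdπ).resolve_left hdN⟩

end Valid

end Invariant

section Bits

/-- The lowest one of the binary expansion of `m`, as a power of two. -/
def lowBit (m : ℕ) : ℕ := m.xor (m.land (m.sub 1))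

/-- The table of the logarithms below `n` to base `2`, which is a primitive root modulo `67`. -/
def logTable : ℕ → ℕ
  | 0 => 0
  | n + 1 => logTable n ||| n <<< (8 * (2 ^ n % 67))

/-- The exponent of the power of two `b < 2 ^ 66`. -/
def log (b : ℕ) : ℕ := ((logTable 66).shiftRight (Nat.mul 8 (b.mod 67))).mod 256

/-- Whether `k` holds for all positions of ones in `m`, of which there are fewer than `n`. The
result of `log` is checked each time, so nothing needs to be proved about it. -/
def allBits (k : ℕ → Bool) (n : ℕ) : ℕ → Bool :=
  Nat.rec (fun _ ↦ false) (fun _ ih m ↦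
    select (Nat.beq m 0) true <|
      force (m.land (m.sub 1)) fun m' ↦ force (log (m.xor m')) fun y ↦
        select (Nat.beq ((Nat.pow 2 y).lor m') m) (select (k y) (ih m') false) false) n

lemma eq_true_of_allBits (k : ℕ → Bool) {n m y : ℕ} (h : allBits k n m = true)
    (hy : m.testBit y = true) : k y = true := by
  induction n generalizing m with
  | zero => exact absurd h Bool.false_ne_true
  | succ n ih =>
    simp only [allBits, force_eq, select_eq, Nat.beq_eq] at h ih
    split_ifs at h with hm hbit hk
    · simp [hm] at hy
    · rw [← hbit] at hy
      obtain rfl | hy : log (m.xor (m.land (m.sub 1))) = y ∨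
          (m.land (m.sub 1)).testBit y = true := by
        simpa [Nat.testBit_two_pow] using hy
      exacts [hk, ih h hy]

end Bits

section Search

/-- Families of pairings that are invariant under permutations of rows and columns fixing the
first `r` rows and the first `s` columns. -/
def IsSymmetric (𝓕 : Set (Cell → Cell)) (r s : ℕ) : Prop :=
  ∀ π ∈ 𝓕, ∀ (σ : Equiv.Perm (Fin 6)) (τ : Equiv.Perm (Fin 7)),
    (∀ i : Fin 6, i < r → σ i = i) → (∀ j : Fin 7, j < s → τ j = j) →
      (σ.prodCongr τ).conj π ∈ 𝓕

lemma exists_perm_apply_le {n : ℕ} (i : Fin n) (r : ℕ) :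
    ∃ σ : Equiv.Perm (Fin n), (∀ j : Fin n, j < r → σ j = j) ∧ σ i ≤ r := by
  obtain hi | hi := le_or_gt (i : ℕ) r
  · exact ⟨1, fun _ _ ↦ rfl, hi⟩
  · refine ⟨Equiv.swap i ⟨r, hi.trans i.isLt⟩, fun j hj ↦ Equiv.swap_apply_of_ne_of_ne ?_ ?_, ?_⟩
    · exact fun h ↦ by omega
    · exact fun h ↦ by simp [h] at hj
    · simp

namespace IsSymmetric

variable {𝓕 : Set (Cell → Cell)} {r s r' s' : ℕ} {c d : Cell}

lemma mono (h : IsSymmetric 𝓕 r s) (hr : r ≤ r') (hs : s ≤ s') : IsSymmetric 𝓕 r' s' :=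
  fun π hπ σ τ hσ hτ ↦
    h π hπ σ τ (fun i hi ↦ hσ i (hi.trans_le hr)) fun j hj ↦ hτ j (hj.trans_le hs)

lemma sep_apply_eq (h : IsSymmetric 𝓕 r s) (hcr : c.1 < r) (hcs : c.2 < s) (hdr : d.1 < r)
    (hds : d.2 < s) : IsSymmetric {π ∈ 𝓕 | π c = d} r s := by
  refine fun π hπ σ τ hσ hτ ↦ ⟨h π hπ.1 σ τ hσ hτ, ?_⟩
  have hc : (σ.prodCongr τ) c = c := Prod.ext (hσ _ hcr) (hτ _ hcs)
  have hd : (σ.prodCongr τ) d = d := Prod.ext (hσ _ hdr) (hτ _ hds)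
  rw [Equiv.conj_apply, (Equiv.symm_apply_eq _).2 hc.symm, hπ.2, hd]

lemma exists_apply_mem_block (h : IsSymmetric 𝓕 r s) (hcr : c.1 < r) (hcs : c.2 < s)
    (h𝓕 : 𝓕.Nonempty) : ∃ π ∈ 𝓕, π c ∈ cells (block r s) := by
  obtain ⟨π, hπ⟩ := h𝓕
  obtain ⟨σ, hσ, hσc⟩ := exists_perm_apply_le (π c).1 r
  obtain ⟨τ, hτ, hτc⟩ := exists_perm_apply_le (π c).2 s
  have hc : (σ.prodCongr τ) c = c := Prod.ext (hσ _ hcr) (hτ _ hcs)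
  refine ⟨_, h π hπ σ τ hσ hτ, ?_⟩
  rw [Equiv.conj_apply, (Equiv.symm_apply_eq _).2 hc.symm]
  exact mem_cells_block.2 ⟨hσc, hτc⟩

end IsSymmetric

/-- Searches take a board, the decided fixed cells, the neighbourhoods of the decided pairs, their
number, and the numbers of rows and columns that may not be permuted. They return `true` only if
there is no pairing to be found. -/
abbrev Search := ℕ → ℕ → List ℕ → ℕ → ℕ → ℕ → Bool

/-- The correctness of a search, stated for a family of pairings because the permutations of rows
and columns that the search factors out move the single pairing. -/
def Search.Sound (rec : Search) : Prop :=
  ∀ ⦃M S ps p r s⦄, rec M S ps p r s = true → ∀ ⦃𝓕⦄, IsSymmetric 𝓕 r s →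
    (∀ π ∈ 𝓕, Valid π M S ps p) → 𝓕 = ∅

/-- Continues with `r` and `s` increased so that they exceed the coordinates of the cell `x`. -/
def grow (x r s : ℕ) (k : ℕ → ℕ → Bool) : Bool :=
  force (max r (x.mod 6).succ) fun r ↦ force (max s (x.div 6).succ) fun s ↦ k r s

/-- Compares the number of cells of `N` in the set `P` of the decided pairs with its upper bound
`p + 1`; when that is attained, `N` contains no further pair. -/
def tighten (N P p M : ℕ) (k : ℕ → Bool) : Bool :=
  force (popcount (N.land P)) fun n ↦
    select (Nat.ble n p) (k M) <|
      select (Nat.beq n p.succ) (force (M.land (undoubled N)) k) true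

/-- Applies `tighten` to those members of `ps` that contain `xy`. -/
def tightenAll (xy P p : ℕ) (k : ℕ → Bool) (ps : List ℕ) : ℕ → Bool :=
  List.rec k (fun N _ ih M ↦ select (Nat.beq (N.land xy) xy) (tighten N P p M ih) (ih M)) ps

/-- Decides that the undecided cells `e` are fixed. -/
def addSingles (e M S : ℕ) (ps : List ℕ) (p : ℕ) (k : ℕ → ℕ → Bool) : Bool :=
  force (S.lor e) fun S ↦ force (M.xor e) fun M ↦
    select (columnsOk S)
      (force (decided M) fun D ↦ force (p.add 5) fun b ↦ select (loadsOk D b ps) (k M S) true) true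

/-- Decides that the cell `x` is fixed, unless its row already has five fixed cells. -/
def branchSingle (rec : Search) (M S : ℕ) (ps : List ℕ) (p r s x : ℕ) : Bool :=
  select (Nat.ble (popcount (S.land (firstRow.shiftLeft (x.mod 6)))) 4)
    (addSingles (Nat.pow 2 x) M S ps p fun M S ↦
      force (M.land (without x)) fun M ↦ rec M S ps p r s) true

/-- Decides that the cells `x` and `y` form a pair. -/
def branchPair (rec : Search) (M S D P : ℕ) (ps : List ℕ) (p r s x y : ℕ) : Bool :=
  force (nbrs x y) fun N ↦ force p.succ fun p ↦
    select (Nat.ble (popcount (N.land D)) (p.add 5))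
      (force (M.land (compatible x y)) fun M ↦ force ((Nat.pow 2 x).lor (Nat.pow 2 y)) fun xy ↦
        force (P.lor xy) fun P ↦
          tighten N P p M <| tightenAll xy P p (fun M ↦ grow y r s (rec M S (N :: ps) p)) ps) true

/-- Branches on the partner of the undecided cell `x`. -/
def branch (rec : Search) (M S : ℕ) (ps : List ℕ) (p r s x : ℕ) : Bool :=
  select ((undecided M).testBit x)
    (grow x r s fun r s ↦
      select (branchSingle rec M S ps p r s x)
        (force ((candidates M x).land (block r s)) fun m ↦ force (decided M) fun D ↦
          force (D.xor S) fun P ↦ allBits (branchPair rec M S D P ps p r s x) 43 m) false) false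

/-- One at the lowest position of the entry of each cell that has a candidate in `M`. -/
def nonemptyEntries (M : ℕ) : ℕ :=
  ((M.add (board full (fun _ ↦ full) 42)).shiftRight 42).land (board 1 (fun _ ↦ 1) 42)

/-- The set of the cells `x` with a one at `slot x` in `M`: modulo `2 ^ 43 - 1`, the shift by `44`
from one entry to the next becomes a shift by one. -/
def squash (M : ℕ) : ℕ := (M.shiftRight 44).mod (Nat.sub (Nat.pow 2 43) 1)

/-- The undecided cells without candidates. -/
def stuck (M : ℕ) : ℕ := (undecided M).xor ((undecided M).land (squash (nonemptyEntries M)))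

/-- The cell to branch on: one of the first column, or else one with a single candidate, or else
any undecided cell. -/
def nextCell (M : ℕ) : ℕ :=
  force (undecided M) fun U ↦ force (U.land 63) fun c ↦
    select (Nat.beq c 0)
      (force (stuck (M.land (M.sub (nonemptyEntries M)))) fun e ↦
        log (lowBit (select (Nat.beq e 0) U e)))
      (log (lowBit c))

/-- Decides that all cells without candidates are fixed. -/
def settle (M S : ℕ) (ps : List ℕ) (p : ℕ) (k : ℕ → ℕ → Bool) : Bool :=
  force (stuck M) fun e ↦
    select (Nat.beq e 0) (k M S) <|
      select (allBits (fun x ↦ Nat.beq (candidates M x) 0) 43 e) (addSingles e M S ps p k) false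

/-- The exhaustive search with recursion depth at most `n`. -/
def search : ℕ → Search
  | 0 => fun _ _ _ _ _ _ ↦ false
  | n + 1 => fun M S ps p r s ↦ settle M S ps p fun M S ↦
      force (nextCell M) fun x ↦ branch (search n) M S ps p r s x

variable {π : Cell → Cell} {𝓕 : Set (Cell → Cell)} {M S p r s : ℕ} {ps : List ℕ} {rec : Search}
  {c d : Cell} {N D P : ℕ}

lemma grow_eq (x r s : ℕ) (k : ℕ → ℕ → Bool) :
    grow x r s k = k (max r (x % 6 + 1)) (max s (x / 6 + 1)) := by
  simp only [grow, force_eq]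
  rfl

lemma addSingles_eq {e : ℕ} {k : ℕ → ℕ → Bool} (h : Valid π (M.xor e) (S.lor e) ps p) :
    addSingles e M S ps p k = k (M.xor e) (S.lor e) := by
  simp only [addSingles, force_eq, h.columnsOk, h.loadsOk, select_eq, if_true]

lemma exists_of_tighten {k : ℕ → Bool} (h : tighten N P p M k = true) (h𝓕 : 𝓕.Nonempty)
    (hvalid : ∀ π ∈ 𝓕, Valid π M S ps p) (hN : N ∈ ps) (hP : cells P = (cells M)ᶜ \ cells S) :
    ∃ M', k M' = true ∧ cells M' = cells M ∧ ∀ π ∈ 𝓕, Valid π M' S ps p := by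
  have hle := fun π hπ ↦ (hvalid π hπ).two_mul_popcount_add_le hN hP
  simp only [tighten, force_eq, select_eq, Nat.ble_eq, Nat.beq_eq] at h
  split_ifs at h with hlt heq
  · exact ⟨M, h, rfl, hvalid⟩
  · refine ⟨_, h, ?_, fun π hπ ↦ (hvalid π hπ).land_undoubled fun c hc hne hcN hπcN ↦ ?_⟩
    · rw [cells_land, undoubled, force_eq, cells_board, cells_full, inter_univ]
    · have hpos : 0 < #{d ∈ cells M | π d ≠ d ∧ d ∈ cells N ∧ π d ∈ cells N} :=
        card_pos.2 ⟨c, mem_filter.2 ⟨hc, hne, hcN, hπcN⟩⟩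
      have := hle π hπ
      omega
  · obtain ⟨π, hπ⟩ := h𝓕
    have := hle π hπ
    omega

lemma exists_of_tightenAll {xy : ℕ} {k : ℕ → Bool} {qs : List ℕ}
    (h : tightenAll xy P p k qs M = true) (h𝓕 : 𝓕.Nonempty)
    (hvalid : ∀ π ∈ 𝓕, Valid π M S ps p) (hqs : qs ⊆ ps)
    (hP : cells P = (cells M)ᶜ \ cells S) : ∃ M', k M' = true ∧ ∀ π ∈ 𝓕, Valid π M' S ps p := by
  induction qs generalizing M with
  | nil => exact ⟨M, h, hvalid⟩
  | cons N qs ih =>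
    obtain ⟨hN, hqs⟩ := List.cons_subset.1 hqs
    simp only [tightenAll, select_eq] at h ih
    split_ifs at h
    · obtain ⟨M', h', hM', hvalid'⟩ := exists_of_tighten h h𝓕 hvalid hN hP
      exact ih h' hvalid' hqs (hM' ▸ hP)
    · exact ih h hvalid hqs hP

lemma exists_of_settle {k : ℕ → ℕ → Bool} (h : settle M S ps p k = true) (h𝓕 : 𝓕.Nonempty)
    (hvalid : ∀ π ∈ 𝓕, Valid π M S ps p) :
    ∃ M' S', k M' S' = true ∧ ∀ π ∈ 𝓕, Valid π M' S' ps p := by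
  simp only [settle, force_eq, select_eq] at h
  split_ifs at h with hzero hbits
  · exact ⟨M, S, h, hvalid⟩
  · have hstuck : stuck M < 2 ^ 42 :=
      Nat.xor_lt_two_pow (undecided_lt M) (Nat.and_le_left.trans_lt (undecided_lt M))
    have hsub : cells (stuck M) ⊆ cells M := fun c hc ↦ by
      rw [stuck, cells_xor, cells_land, cells_undecided, mem_symmDiff] at hc
      grind
    have hvalid' (π) (hπ : π ∈ 𝓕) : Valid π (M.xor (stuck M)) (S.lor (stuck M)) ps p := by
      refine (hvalid π hπ).xor_singles hstuck hsub fun c hc ↦ ?_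
      by_contra hne
      have hcand := (hvalid π hπ).apply_mem_candidates c (hsub hc) hne
      have hzero := eq_true_of_allBits _ hbits (mem_cells.1 hc)
      rw [Nat.eq_of_beq_eq_true hzero] at hcand
      simp at hcand
    obtain ⟨π, hπ⟩ := h𝓕
    rw [addSingles_eq (hvalid' π hπ)] at h
    exact ⟨_, _, h, hvalid'⟩

namespace Search.Sound

lemma sep_eq_empty_of_branchSingle (hrec : rec.Sound) (h𝓕 : IsSymmetric 𝓕 r s) (hcr : c.1 < r)
    (hcs : c.2 < s) (hvalid : ∀ π ∈ 𝓕, Valid π M S ps p) (hc : c ∈ cells M)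
    (h : branchSingle rec M S ps p r s (index c) = true) : {π ∈ 𝓕 | π c = c} = ∅ := by
  by_contra! ⟨π, hπ⟩
  have hcells : cells (2 ^ index c) = {c} := cells_two_pow c
  have hvalid' (π) (hπ : π ∈ {π ∈ 𝓕 | π c = c}) :
      Valid π (M.xor (2 ^ index c)) (S.lor (2 ^ index c)) ps p :=
    (hvalid π hπ.1).xor_singles (Nat.pow_lt_pow_right one_lt_two (index_lt c))
      (by simpa [hcells] using hc) (by simpa [hcells] using hπ.2)
  have hcM : c ∉ cells (M.xor (2 ^ index c)) := by simpa [cells_xor, hcells, mem_symmDiff] using hc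
  have hrow : Nat.ble (popcount (S.land (firstRow.shiftLeft ((index c).mod 6)))) 4 = true := by
    rw [Nat.ble_eq, show (index c).mod 6 = c.1 from index_mod c]
    exact (hvalid π hπ.1).popcount_row_le hc hπ.2
  rw [branchSingle, select_eq, if_pos hrow, Nat.pow_eq, addSingles_eq (hvalid' π hπ),
    force_eq] at h
  exact Set.notMem_empty π <| hrec h (h𝓕.sep_apply_eq hcr hcs hcr hcs)
    (fun π hπ ↦ (hvalid' π hπ).land_without hcM hπ.2) ▸ hπ

lemma sep_eq_empty_of_branchPair (hrec : rec.Sound) (h𝓕 : IsSymmetric 𝓕 r s) (hcr : c.1 < r)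
    (hcs : c.2 < s) (hvalid : ∀ π ∈ 𝓕, Valid π M S ps p) (hc : c ∈ cells M) (hdc : d ≠ c)
    (hD : cells D = (cells M)ᶜ) (hP : cells P = (cells M)ᶜ \ cells S)
    (h : branchPair rec M S D P ps p r s (index c) (index d) = true) :
    {π ∈ 𝓕 | π c = d} = ∅ := by
  by_contra! hne
  set M' := M.land (compatible (index c) (index d)) with hM'
  have hvalid' (π) (hπ : π ∈ {π ∈ 𝓕 | π c = d}) :
      Valid π M' S (nbrs (index c) (index d) :: ps) p.succ := by
    obtain ⟨hπ, rfl⟩ := hπ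
    exact (hvalid π hπ).land_compatible hc hdc
  obtain ⟨π, hπ⟩ := hne
  have hP' : cells ((P.lor ((2 ^ index c).lor (2 ^ index d)))) = (cells M')ᶜ \ cells S := by
    have hcS := (hvalid π hπ.1).mem_cells_iff c
    have hdS := (hvalid π hπ.1).mem_cells_iff d
    have hdM := hπ.2 ▸ (hvalid π hπ.1).apply_mem c hc
    ext z
    rw [cells_lor, cells_lor, cells_two_pow, cells_two_pow, hP, hM', cells_land]
    simp only [mem_union, mem_sdiff, mem_compl, mem_inter, mem_singleton,
      mem_cells_compatible hdc.symm]
    grind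
  simp only [branchPair, force_eq, select_eq, Nat.ble_eq, Nat.pow_eq] at h
  split_ifs at h with hload
  · obtain ⟨M₁, h₁, hM₁, hvalid₁⟩ := exists_of_tighten h ⟨π, hπ⟩ hvalid' List.mem_cons_self hP'
    obtain ⟨M₂, h₂, hvalid₂⟩ := exists_of_tightenAll h₁ ⟨π, hπ⟩ hvalid₁
      (List.subset_cons_self _ _) (hM₁ ▸ hP')
    rw [grow_eq, index_mod, index_div] at h₂
    have hsymm := h𝓕.mono (le_max_left r (d.1 + 1)) (le_max_left s (d.2 + 1))
    exact Set.notMem_empty π <| hrec h₂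
      (hsymm.sep_apply_eq (by omega) (by omega) (by omega) (by omega)) hvalid₂ ▸ hπ
  · refine hload ((hvalid' π hπ).popcount_land_le List.mem_cons_self ?_)
    rw [hD, hM', cells_land]
    exact compl_subset_compl.2 inter_subset_left

lemma eq_empty_of_branch (hrec : rec.Sound) (h𝓕 : IsSymmetric 𝓕 r s)
    (hvalid : ∀ π ∈ 𝓕, Valid π M S ps p) {x : ℕ} (h : branch rec M S ps p r s x = true) :
    𝓕 = ∅ := by
  simp only [branch, force_eq, grow_eq, select_eq] at h
  split_ifs at h with hx hsingle
  obtain ⟨c, rfl⟩ : ∃ c, index c = x :=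
    exists_index_eq <| (Nat.pow_lt_pow_iff_right one_lt_two).1 <|
      (Nat.ge_two_pow_of_testBit hx).trans_lt (undecided_lt M)
  have hc : c ∈ cells M := cells_undecided M ▸ mem_cells.2 hx
  simp only [index_mod, index_div] at h hsingle
  have hsymm := h𝓕.mono (le_max_left r (c.1 + 1)) (le_max_left s (c.2 + 1))
  have hcr : c.1 < max r (c.1 + 1) := by omega
  have hcs : c.2 < max s (c.2 + 1) := by omega
  by_contra! hne
  obtain ⟨π, hπ, hblock⟩ := hsymm.exists_apply_mem_block hcr hcs hne
  have hfix := hrec.sep_eq_empty_of_branchSingle hsymm hcr hcs hvalid hc hsingle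
  have hπc : π c ≠ c := fun hπc ↦ Set.notMem_empty π (hfix ▸ ⟨hπ, hπc⟩)
  have hcand : π c ∈ cells ((candidates M (index c)).land (block _ _)) :=
    cells_land _ _ ▸ mem_inter.2 ⟨(hvalid π hπ).apply_mem_candidates c hc hπc, hblock⟩
  have hP : cells ((decided M).xor S) = (cells M)ᶜ \ cells S := by
    ext d
    have := (hvalid π hπ).mem_cells_iff d
    rw [cells_xor, cells_decided, mem_symmDiff, mem_sdiff, mem_compl]
    tauto
  have hpair := hrec.sep_eq_empty_of_branchPair hsymm hcr hcs hvalid hc hπc (cells_decided M) hP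
    (eq_true_of_allBits _ h (mem_cells.1 hcand))
  exact Set.notMem_empty π (hpair ▸ ⟨hπ, rfl⟩)

end Search.Sound

lemma search_sound (n : ℕ) : (search n).Sound := by
  induction n with
  | zero => exact fun _ _ _ _ _ _ h ↦ absurd h Bool.false_ne_true
  | succ n ih =>
    intro M S ps p r s h 𝓕 h𝓕 hvalid
    by_contra! hne
    simp only [search, force_eq] at h
    obtain ⟨M', S', h', hvalid'⟩ := exists_of_settle h hne hvalid
    exact hne.ne_empty (ih.eq_empty_of_branch h𝓕 hvalid' h')

end Search

section Exhaustion

lemma IsPairing.valid_initialBoard {π : Cell → Cell} (hπ : IsPairing π)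
    (hcol : ∀ i ≠ 0, π (i, 0) ≠ (i, 0)) : Valid π initialBoard 0 [] 0 := by
  have hcells : cells initialBoard = univ := by rw [initialBoard, cells_board, cells_full]
  refine ⟨hπ, hcol, fun c _ ↦ by simp [hcells], by simp [hcells], by simp [hcells], by simp,
    fun c _ hc ↦ cells_candidates_board _ _ c ?_⟩
  have hline : π c ∉ cells (line (index c)) := by
    have hrow := hπ.row_ne c hc
    have hcol := hπ.col_ne c hc
    rw [mem_cells_line, rook_adj]
    tauto
  rw [← Nat.xor_eq, ← Nat.xor_eq, cells_xor, cells_xor, cells_full, cells_two_pow]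
  simp [mem_symmDiff, hline, hc]

set_option maxHeartbeats 0 in
-- The search visits more than a hundred thousand nodes.
lemma search_initialBoard : search 43 initialBoard 0 [] 0 1 1 = true := by
  decide +kernel

theorem not_isPairing (π : Cell → Cell) : ¬ IsPairing π := by
  intro hπ
  obtain ⟨σ, τ, hcol⟩ := hπ.exists_conj_first_column
  let 𝓕 : Set (Cell → Cell) := {π | IsPairing π ∧ ∀ i ≠ 0, π (i, 0) ≠ (i, 0)}
  have hsymm : IsSymmetric 𝓕 1 1 := by
    refine fun π hπ σ τ hσ hτ ↦ ⟨hπ.1.conj σ τ, fun i hi h ↦ ?_⟩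
    have hrow : σ.symm i ≠ 0 := (Equiv.symm_apply_eq σ).not.2 (by rwa [hσ 0 zero_lt_one])
    have hcell : (σ.prodCongr τ).symm (i, 0) = (σ.symm i, 0) :=
      Prod.ext rfl ((Equiv.symm_apply_eq τ).2 (hτ 0 zero_lt_one).symm)
    rw [Equiv.conj_apply, ← Equiv.eq_symm_apply, hcell] at h
    exact hπ.2 _ hrow h
  have hempty : 𝓕 = ∅ :=
    search_sound 43 search_initialBoard hsymm fun π hπ ↦ hπ.1.valid_initialBoard hπ.2
  exact Set.notMem_empty _ (hempty.subset ⟨hπ.conj σ τ, hcol⟩)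

end Exhaustion

section LowerBound

/-- A complete colouring of `rook` with `18` colours. -/
def colouring (c : Cell) : Fin 18 :=
  ![![0, 1, 2, 3, 4, 5, 6],
    ![6, 7, 8, 9, 10, 11, 0],
    ![12, 13, 14, 15, 16, 17, 1],
    ![16, 11, 3, 2, 12, 7, 4],
    ![9, 4, 17, 6, 1, 14, 2],
    ![5, 15, 10, 13, 8, 0, 3]] c.1 c.2

lemma isProperComplete_colouring : IsProperComplete rook colouring := by
  have hproper : ∀ v w, rook.Adj v w → colouring v ≠ colouring w := by decide +kernel
  have hcomplete : ∀ a b, a ≠ b → ∃ v, colouring v = a ∧ ∃ w, colouring w = b ∧ rook.Adj v w := by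
    decide +kernel
  refine ⟨hproper, fun a ↦ ?_, fun a b hab ↦ ?_⟩
  · obtain ⟨b, hab⟩ := exists_ne a
    obtain ⟨v, hv, -⟩ := hcomplete a b hab.symm
    exact ⟨v, hv⟩
  · obtain ⟨v, hv, w, hw, hvw⟩ := hcomplete a b hab
    exact ⟨v, w, hvw, hv, hw⟩

end LowerBound

end RookColouring

theorem achr_K6_K7 :
    achr ((⊤ : SimpleGraph (Fin 6)) □ (⊤ : SimpleGraph (Fin 7))) = 18 := by
  refine IsGreatest.csSup_eq
    ⟨⟨RookColouring.colouring, RookColouring.isProperComplete_colouring⟩, fun n ⟨f, hf⟩ ↦ ?_⟩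
  by_contra! hn
  obtain ⟨π, hπ⟩ := RookColouring.exists_isPairing hf (by rwa [Fintype.card_fin])
  exact RookColouring.not_isPairing π hπ
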